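/- Strict inequality characterizes unique optimality: let S and A be nonempty finite types, P : A → Matrix S S ℝ with each P a row-stochastic, R : S → ℝ, and γ ∈ ℝ with 0 < γ < 1. Let π : S → A be a deterministic policy, P^π(s,j) = (P (π s))(s,j), and V^π = (I − γ·P^π)⁻¹ *ᵥ R. Then the following are equivalent: (i) for every state s ∈ S and every action a ∈ A with a ≠ π(s), the s-component of (P^π − P a) *ᵥ V^π is strictly positive; (ii) π is the unique optimal deterministic policy, i.e. π is optimal and every deterministic policy π' ≠ π fails to be optimal. -/

import Mathlib

open Matrix BigOperators

/-- A matrix is row-stochastic if all entries are nonnegative and every row sums to 1. -/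
def RowStochastic {S : Type*} [Fintype S] (P : Matrix S S ℝ) : Prop :=
  (∀ i j, 0 ≤ P i j) ∧ (∀ i, ∑ j, P i j = 1)

/-- The transition matrix `P^π` of a deterministic policy `π`:
`P^π(s, j) = (P (π s))(s, j)`. -/
def polMat {S A : Type*} (P : A → Matrix S S ℝ) (π : S → A) : Matrix S S ℝ :=
  Matrix.of fun s j => P (π s) s j

/-- The value vector `V^π = (I - γ • P^π)⁻¹ *ᵥ R` of a deterministic policy `π`. -/
noncomputable def polVal {S A : Type*} [Fintype S] [DecidableEq S]
    (P : A → Matrix S S ℝ) (γ : ℝ) (R : S → ℝ) (π : S → A) : S → ℝ :=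
  (1 - γ • polMat P π)⁻¹ *ᵥ R

lemma aux_max {S : Type*} [Fintype S] [Nonempty S] (Q : Matrix S S ℝ)
    (hQ : RowStochastic Q) (γ : ℝ) (hγ0 : 0 < γ) (hγ1 : γ < 1) (d : S → ℝ)
    (hd : ∀ s, γ * (Q *ᵥ d) s ≤ d s) : ∀ s, 0 ≤ d s := by
  obtain ⟨m, hm⟩ := Finite.exists_min d
  have h1 : d m ≤ (Q *ᵥ d) m := by
    calc d m = ∑ j, Q m j * d m := by rw [← Finset.sum_mul, hQ.2 m, one_mul]
      _ ≤ ∑ j, Q m j * d j :=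
        Finset.sum_le_sum fun j _ => mul_le_mul_of_nonneg_left (hm j) (hQ.1 m j)
      _ = (Q *ᵥ d) m := rfl
  have h2 := hd m
  have h3 : 0 ≤ d m := by nlinarith
  exact fun s => h3.trans (hm s)

lemma aux_min {S : Type*} [Fintype S] [Nonempty S] (Q : Matrix S S ℝ)
    (hQ : RowStochastic Q) (γ : ℝ) (hγ0 : 0 < γ) (hγ1 : γ < 1) (d : S → ℝ)
    (hd : ∀ s, d s ≤ γ * (Q *ᵥ d) s) : ∀ s, d s ≤ 0 := by
  intro s
  have := aux_max Q hQ γ hγ0 hγ1 (-d) (fun t => by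
    rw [Matrix.mulVec_neg]; have := hd t; simp only [Pi.neg_apply]; linarith) s
  simpa using this

lemma aux_unit {S : Type*} [Fintype S] [DecidableEq S] [Nonempty S] (Q : Matrix S S ℝ)
    (hQ : RowStochastic Q) (γ : ℝ) (hγ0 : 0 < γ) (hγ1 : γ < 1) :
    IsUnit (1 - γ • Q) := by
  rw [← Matrix.mulVec_injective_iff_isUnit]
  intro v w hvw
  have h : ∀ s, (v - w) s = γ * (Q *ᵥ (v - w)) s := by
    intro s
    have := congrFun hvw s
    simp only [Matrix.sub_mulVec, Matrix.one_mulVec, Matrix.smul_mulVec, Matrix.mulVec_sub,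
      Pi.sub_apply, Pi.smul_apply, smul_eq_mul] at this ⊢
    linarith
  ext s
  have h1 := aux_max Q hQ γ hγ0 hγ1 _ (fun s => (h s).ge) s
  have h2 := aux_min Q hQ γ hγ0 hγ1 _ (fun s => (h s).le) s
  simp only [Pi.sub_apply] at h1 h2
  linarith

lemma aux_pol {S A : Type*} [Fintype S] (P : A → Matrix S S ℝ)
    (hP : ∀ a, RowStochastic (P a)) (π : S → A) : RowStochastic (polMat P π) :=
  ⟨fun i j => (hP (π i)).1 i j, fun i => (hP (π i)).2 i⟩

lemma aux_bellman {S A : Type*} [Fintype S] [DecidableEq S] [Nonempty S] (P : A → Matrix S S ℝ)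
    (hP : ∀ a, RowStochastic (P a)) (R : S → ℝ) (γ : ℝ) (hγ0 : 0 < γ) (hγ1 : γ < 1)
    (π : S → A) (s : S) :
    polVal P γ R π s = R s + γ * (polMat P π *ᵥ polVal P γ R π) s := by
  have hu := aux_unit _ (aux_pol P hP π) γ hγ0 hγ1
  have : (1 - γ • polMat P π) *ᵥ polVal P γ R π = R := by
    rw [polVal, Matrix.mulVec_mulVec,
      Matrix.mul_nonsing_inv _ ((Matrix.isUnit_iff_isUnit_det _).1 hu), Matrix.one_mulVec]
  have := congrFun this s
  simp only [Matrix.sub_mulVec, Matrix.one_mulVec, Matrix.smul_mulVec,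
      Pi.sub_apply, Pi.smul_apply, smul_eq_mul] at this
  linarith

lemma aux_diff {S A : Type*} [Fintype S] [DecidableEq S] [Nonempty S] (P : A → Matrix S S ℝ)
    (hP : ∀ a, RowStochastic (P a)) (R : S → ℝ) (γ : ℝ) (hγ0 : 0 < γ) (hγ1 : γ < 1)
    (π π' : S → A) (s : S) :
    (polVal P γ R π - polVal P γ R π') s =
      γ * ((polMat P π - P (π' s)) *ᵥ polVal P γ R π) s +
      γ * (polMat P π' *ᵥ (polVal P γ R π - polVal P γ R π')) s := by
  have h1 := aux_bellman P hP R γ hγ0 hγ1 π s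
  have h2 := aux_bellman P hP R γ hγ0 hγ1 π' s
  have h3 : (P (π' s) *ᵥ polVal P γ R π) s = (polMat P π' *ᵥ polVal P γ R π) s := rfl
  simp only [Matrix.sub_mulVec, Matrix.mulVec_sub, Pi.sub_apply] at *
  rw [h3]
  linarith

/-- Strict inequality in the optimality condition characterizes unique optimality. -/
theorem strict_advantage_iff_unique_optimal {S A : Type*} [Fintype S] [DecidableEq S]
    [Nonempty S] [Fintype A] [Nonempty A] (P : A → Matrix S S ℝ)
    (hP : ∀ a, RowStochastic (P a)) (R : S → ℝ) (γ : ℝ) (hγ0 : 0 < γ) (hγ1 : γ < 1)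
    (π : S → A) :
    (∀ s : S, ∀ a : A, a ≠ π s →
        0 < ((polMat P π - P a) *ᵥ ((1 - γ • polMat P π)⁻¹ *ᵥ R)) s) ↔
    ((∀ π' : S → A, ∀ s : S, polVal P γ R π' s ≤ polVal P γ R π s) ∧
      ∀ π' : S → A, π' ≠ π →
        ¬ (∀ π'' : S → A, ∀ s : S, polVal P γ R π'' s ≤ polVal P γ R π' s)) := by
  change (∀ s : S, ∀ a : A, a ≠ π s → 0 < ((polMat P π - P a) *ᵥ polVal P γ R π) s) ↔ _
  have hself : ∀ s, ((polMat P π - P (π s)) *ᵥ polVal P γ R π) s = 0 := by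
    intro s
    have h3 : (P (π s) *ᵥ polVal P γ R π) s = (polMat P π *ᵥ polVal P γ R π) s := rfl
    simp only [Matrix.sub_mulVec, Pi.sub_apply, h3, sub_self]
  constructor
  · intro h
    have hopt : ∀ π' : S → A, ∀ s : S, polVal P γ R π' s ≤ polVal P γ R π s := by
      intro π' s
      have := aux_max _ (aux_pol P hP π') γ hγ0 hγ1 (polVal P γ R π - polVal P γ R π') (fun t => by
        rw [aux_diff P hP R γ hγ0 hγ1 π π' t]
        have : 0 ≤ ((polMat P π - P (π' t)) *ᵥ polVal P γ R π) t := by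
          by_cases e : π' t = π t
          · rw [e, hself]
          · exact (h t _ e).le
        have := mul_nonneg hγ0.le this
        linarith) s
      simpa using this
    refine ⟨hopt, fun π' hne hπ' => ?_⟩
    obtain ⟨s, hs⟩ := Function.ne_iff.1 hne
    have hd : polVal P γ R π - polVal P γ R π' = 0 := by
      ext t
      simp only [Pi.sub_apply, Pi.zero_apply]
      linarith [hopt π' t, hπ' π t]
    have := aux_diff P hP R γ hγ0 hγ1 π π' s
    rw [hd] at this
    simp only [Matrix.mulVec_zero, Pi.zero_apply, mul_zero, add_zero] at this
    have := mul_pos hγ0 (h s _ hs)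
    linarith
  · rintro ⟨hopt, huniq⟩ s a ha
    by_contra hcon
    push Not at hcon
    have hne : Function.update π s a ≠ π := fun e => ha (by
      have := congrFun e s
      simpa using this)
    refine huniq _ hne fun π'' t => (hopt π'' t).trans ?_
    have := aux_min _ (aux_pol P hP (Function.update π s a)) γ hγ0 hγ1
      (polVal P γ R π - polVal P γ R (Function.update π s a)) (fun t => by
        rw [aux_diff P hP R γ hγ0 hγ1 π (Function.update π s a) t]
        have : ((polMat P π - P (Function.update π s a t)) *ᵥ polVal P γ R π) t ≤ 0 := by
          by_cases e : t = s
          · subst e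
            simpa using hcon
          · rw [Function.update_of_ne e, hself]
        have := mul_nonpos_of_nonneg_of_nonpos hγ0.le this
        linarith) t
    simpa using this
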